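/- Let F be drawn from SSBM(N,K,p,q) conditional on Y, let B be r-homogeneous with pairwise disjoint rows and balanced and CO-ν with respect to Y, let C = B F Bᵀ, and for 0 ≤ γ ≤ 1 let C̄ be the binarization C̄_{ij} = 1 if C_{ij} ≥ r²(γp + (1−γ)q) and C̄_{ij} = 0 otherwise. Then the entries {C̄_{ij} : i > j} are mutually independent, and each C̄_{ij} is Bernoulli with success probability U(a_i, a_j) := P( X ≥ r²(γp + (1−γ)q) ), where a_i = b_i Yᵀ and X ~ PoissonBinomial({p}^{a_i·a_j}, {q}^{r² − a_i·a_j}). -/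

import Mathlib

/-!
For `i > j` the entry `(B F Bᵀ) i j` is the sum of `F u v` over the rectangle
`supp b_i × supp b_j`. Because the supports are disjoint, distinct points of all these rectangles
are distinct *unordered* pairs `{u, v}` with `u ≠ v`, so after orienting each pair upwards they
select distinct edge variables. Hence the summands of all entries together are independent, and
sums over different rectangles are independent. The rectangle has `|supp b_i| |supp b_j|` points,
of which `∑ u v, B i u (Yᵀ Y) u v B j v = a_i · a_j` lie within one community.
-/

open MeasureTheory ProbabilityTheory
open scoped ENNReal NNReal

/-- Law (on `ℕ`, via the indicator `true ↦ 1`) of a Bernoulli random variable with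
success probability `p`. -/
noncomputable def bernNat (p : ℝ≥0∞) (hp : p ≤ 1) : PMF ℕ :=
  (PMF.ofFintype (fun b : Bool => cond b p (1 - p)) (by simp [hp])).map fun b => if b then 1 else 0

/-- Law of the sum of `n` independent copies of an `ℕ`-valued random variable with law `μ`. -/
noncomputable def iidSum (μ : PMF ℕ) : ℕ → PMF ℕ
  | 0 => PMF.pure 0
  | n + 1 => (iidSum μ n).bind fun s => μ.map fun x => s + x

/-- Poisson binomial law `PoissonBinomial({p}^m, {q}^k)`: the law of the sum of `m + k`
independent Bernoulli random variables, `m` with success probability `p` and `k` with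
success probability `q`. -/
noncomputable def poissonBinomial (p q : ℝ≥0∞) (hp : p ≤ 1) (hq : q ≤ 1) (m k : ℕ) : PMF ℕ :=
  (iidSum (bernNat p hp) m).bind fun s => (iidSum (bernNat q hq) k).map fun t => s + t

section Law

variable {Ω ι : Type*} {mΩ : MeasurableSpace Ω} {μ : Measure Ω}

lemma toMeasure_bind_map_add {E : Type*} [AddMonoid E] [Countable E] [MeasurableSpace E]
    [MeasurableSingletonClass E] (a b : PMF E) :
    (a.bind fun s => b.map fun t => s + t).toMeasure = a.toMeasure ∗ b.toMeasure := by
  ext s hs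
  rw [PMF.toMeasure_bind_apply _ _ _ hs, ← lintegral_indicator_one hs,
    Measure.lintegral_conv (by fun_prop), lintegral_countable']
  refine tsum_congr fun n => ?_
  rw [PMF.toMeasure_apply_singleton _ _ (.singleton n), mul_comm,
    PMF.toMeasure_map_apply _ _ _ (by fun_prop) hs,
    ← lintegral_indicator_one (hs.preimage (by fun_prop))]
  rfl

lemma hasLaw_finsetSum_iidSum {X : ι → Ω → ℕ} {a : PMF ℕ} {s : Finset ι}
    (h_indep : iIndepFun X μ) (hX : ∀ i, AEMeasurable (X i) μ)
    (h_law : ∀ i ∈ s, HasLaw (X i) a.toMeasure μ) :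
    HasLaw (∑ i ∈ s, X i) (iidSum a s.card).toMeasure μ := by
  classical
  have := h_indep.isProbabilityMeasure
  induction s using Finset.induction_on with
  | empty =>
    rw [Finset.sum_empty, Finset.card_empty, iidSum, PMF.toMeasure_pure]
    exact hasLaw_dirac_of_ae_eq ae_eq_rfl
  | insert i s hi ih =>
    rw [Finset.sum_insert hi, Finset.card_insert_of_notMem hi, add_comm, iidSum,
      toMeasure_bind_map_add]
    exact (h_indep.indepFun_finsetSum_of_notMem₀ hX hi).hasLaw_add
      (ih fun j hj => h_law j (Finset.mem_insert_of_mem hj))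
      (h_law i (Finset.mem_insert_self i s))

lemma indepFun_finsetSum_of_disjoint {E : Type*} [AddCommMonoid E] [MeasurableSpace E]
    [MeasurableAdd₂ E] {X : ι → Ω → E} {s t : Finset ι} (hst : Disjoint s t)
    (h_indep : iIndepFun X μ) (hX : ∀ i, AEMeasurable (X i) μ) :
    IndepFun (∑ i ∈ s, X i) (∑ i ∈ t, X i) μ := by
  have sum_eq (r : Finset ι) :
      ∑ i ∈ r, X i = (fun f : r → E => ∑ i, f i) ∘ fun ω (i : r) => X i ω := by
    ext ω
    simp only [Finset.sum_apply, Function.comp_apply, Finset.sum_coe_sort r fun i => X i ω]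
  rw [sum_eq s, sum_eq t]
  exact (h_indep.indepFun_finset₀ s t hst hX).comp (by fun_prop) (by fun_prop)

lemma hasLaw_finsetSum_poissonBinomial {X : ι → Ω → ℕ} {p q : ℝ≥0∞} {hp : p ≤ 1} {hq : q ≤ 1}
    {P : ι → Prop} [DecidablePred P] (s : Finset ι) (h_indep : iIndepFun X μ)
    (h_law : ∀ i, HasLaw (X i) (if P i then bernNat p hp else bernNat q hq).toMeasure μ) :
    HasLaw (∑ i ∈ s, X i)
      (poissonBinomial p q hp hq (s.filter P).card (s.filter fun i => ¬ P i).card).toMeasure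
      μ := by
  have hX i : AEMeasurable (X i) μ := (h_law i).aemeasurable
  rw [← Finset.sum_filter_add_sum_filter_not s P, poissonBinomial, toMeasure_bind_map_add]
  refine (indepFun_finsetSum_of_disjoint (Finset.disjoint_filter_filter_not s s P)
    h_indep hX).hasLaw_add (hasLaw_finsetSum_iidSum h_indep hX fun i hi => ?_)
    (hasLaw_finsetSum_iidSum h_indep hX fun i hi => ?_)
  · simpa only [if_pos (Finset.mem_filter.mp hi).2] using h_law i
  · simpa only [if_neg (Finset.mem_filter.mp hi).2] using h_law i

lemma toMeasure_bernNat (p : ℝ≥0∞) (hp : p ≤ 1) :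
    (bernNat p hp).toMeasure = p • Measure.dirac 1 + (1 - p) • Measure.dirac 0 := by
  refine Measure.ext_of_singleton fun n => ?_
  rw [PMF.toMeasure_apply_singleton _ _ (.singleton n), bernNat, PMF.map_apply, tsum_bool]
  rcases n with _ | _ | n <;> simp

lemma hasLaw_ite_bernNat [IsProbabilityMeasure μ] {P : Ω → Prop} [DecidablePred P]
    (hP : MeasurableSet {ω | P ω}) :
    HasLaw (fun ω => if P ω then 1 else 0) (bernNat (μ {ω | P ω}) prob_le_one).toMeasure μ where
  aemeasurable := (Measurable.ite hP measurable_const measurable_const).aemeasurable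
  map_eq := by
    rw [toMeasure_bernNat, ← prob_compl_eq_one_sub hP]
    refine Measure.ext_of_singleton fun n => ?_
    rw [Measure.map_apply (Measurable.ite hP measurable_const measurable_const) (.singleton n)]
    rcases n with _ | _ | n <;> simp [Set.preimage, ite_eq_iff, Set.compl_def]

end Law

section Independence

variable {Ω ι : Type*} {mΩ : MeasurableSpace Ω} {μ : Measure Ω}

lemma iIndepFun_curry {κ : ι → Type*} {E : (i : ι) → κ i → Type*}
    {mE : ∀ i j, MeasurableSpace (E i j)} {X : (i : ι) → (j : κ i) → Ω → E i j}
    (hX : ∀ i j, Measurable (X i j))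
    (h : iIndepFun (fun (p : (i : ι) × κ i) ω => X p.1 p.2 ω) μ) :
    iIndepFun (fun i ω => (X i · ω)) μ := by
  have := h.isProbabilityMeasure
  have (i : ι) (j : κ i) : IsProbabilityMeasure (μ.map (X i j)) :=
    Measure.isProbabilityMeasure_map (hX i j).aemeasurable
  have block_indep (i : ι) : iIndepFun (X i) μ :=
    h.precomp (g := Sigma.mk i) sigma_mk_injective
  have block_law (i : ι) :
      μ.map (fun ω => (X i · ω)) = Measure.infinitePi fun j => μ.map (X i j) :=
    (block_indep i).map_fun_eq_infinitePi_map (hX i)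
  rw [iIndepFun_iff_map_fun_eq_infinitePi_map (by fun_prop)]
  simp only [block_law]
  rw [← Measure.infinitePi_map_piCurry fun i j => μ.map (X i j),
    ← h.map_fun_eq_infinitePi_map (by fun_prop), Measure.map_map (by fun_prop) (by fun_prop)]
  rfl

variable {V : Type*} [LinearOrder ι] {S : ι → Finset V}

lemma fst_ne_snd_of_mem_product {s t : Finset V} (hst : Disjoint s t) {x : V × V}
    (hx : x ∈ s ×ˢ t) : x.1 ≠ x.2 :=
  Finset.disjoint_iff_ne.mp hst _ (Finset.mem_product.mp hx).1 _ (Finset.mem_product.mp hx).2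

lemma injective_sym2Mk_of_pairwise_disjoint (hS : Pairwise (Function.onFun Disjoint S)) :
    Function.Injective
      fun x : (e : {e : ι × ι // e.2 < e.1}) × ↥(S e.1.1 ×ˢ S e.1.2) =>
        s(x.2.1.1, x.2.1.2) := by
  have index_unique {i j : ι} {u : V} (hi : u ∈ S i) (hj : u ∈ S j) : i = j :=
    hS.eq (Finset.not_disjoint_iff.mpr ⟨u, hi, hj⟩)
  rintro ⟨⟨⟨i, j⟩, hij⟩, ⟨⟨u, v⟩, huv⟩⟩ ⟨⟨⟨i', j'⟩, hij'⟩, ⟨⟨u', v'⟩, huv'⟩⟩ h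
  obtain ⟨hu, hv⟩ := Finset.mem_product.mp huv
  obtain ⟨hu', hv'⟩ := Finset.mem_product.mp huv'
  rcases Sym2.eq_iff.mp h with ⟨rfl, rfl⟩ | ⟨rfl, rfl⟩
  · obtain rfl := index_unique hu hu'
    obtain rfl := index_unique hv hv'
    rfl
  · obtain rfl := index_unique hu hv'
    obtain rfl := index_unique hv hu'
    exact absurd hij hij'.not_gt

variable {E : Type*} [LinearOrder V] [MeasurableSpace E] {F : Ω → Matrix V V E}

lemma iIndepFun_of_injective_sym2Mk {α : Type*} {x : α → V × V} (hF_symm : ∀ ω, (F ω).IsSymm)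
    (hF : iIndepFun (fun (e : {e : V × V // e.1 < e.2}) ω => F ω e.1.1 e.1.2) μ)
    (hx_ne : ∀ a, (x a).1 ≠ (x a).2) (hx : Function.Injective fun a => s((x a).1, (x a).2)) :
    iIndepFun (fun a ω => F ω (x a).1 (x a).2) μ := by
  let sorted (a : α) : {e : V × V // e.1 < e.2} :=
    ⟨(min (x a).1 (x a).2, max (x a).1 (x a).2), min_lt_max.mpr (hx_ne a)⟩
  have sym2Mk_sorted a : s((sorted a).1.1, (sorted a).1.2) = s((x a).1, (x a).2) := by
    rcases le_total (x a).1 (x a).2 with h | h <;> simp [sorted, h, Sym2.eq_swap]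
  have F_sorted a ω : F ω (sorted a).1.1 (sorted a).1.2 = F ω (x a).1 (x a).2 := by
    rcases le_total (x a).1 (x a).2 with h | h <;> simp [sorted, h, (hF_symm ω).apply]
  have sorted_injective : Function.Injective sorted := fun a b hab => hx <| by
    simp only [← sym2Mk_sorted, hab]
  simpa only [Function.comp_def, F_sorted] using hF.precomp sorted_injective

lemma iIndepFun_of_pairwise_disjoint_rectangles (hF_symm : ∀ ω, (F ω).IsSymm)
    (hF : iIndepFun (fun (e : {e : V × V // e.1 < e.2}) ω => F ω e.1.1 e.1.2) μ)
    (hS : Pairwise (Function.onFun Disjoint S)) :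
    iIndepFun (fun (x : (e : {e : ι × ι // e.2 < e.1}) × ↥(S e.1.1 ×ˢ S e.1.2)) ω =>
      F ω x.2.1.1 x.2.1.2) μ :=
  iIndepFun_of_injective_sym2Mk
    (x := fun x : (e : {e : ι × ι // e.2 < e.1}) × ↥(S e.1.1 ×ˢ S e.1.2) => x.2.1) hF_symm hF
    (fun x => fst_ne_snd_of_mem_product (hS x.1.2.ne') x.2.2)
    (injective_sym2Mk_of_pairwise_disjoint hS)

end Independence

section RowSupport

variable {m n R : Type*} [Fintype n] [DecidableEq R]

/-- The support of the `i`-th row of a matrix: `supp b_i` for the measurement matrix. -/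
def rowSupport [Zero R] (B : Matrix m n R) (i : m) : Finset n :=
  Finset.univ.filter fun u => B i u ≠ 0

lemma pairwise_disjoint_rowSupport [MulZeroClass R] [NoZeroDivisors R] {B : Matrix m n R}
    (hB : ∀ i j, i ≠ j → ∀ u, B i u * B j u = 0) :
    Pairwise (Function.onFun Disjoint (rowSupport B)) := fun i j hij =>
  Finset.disjoint_filter.mpr fun u _ hi hj => mul_ne_zero hi hj (hB i j hij u)

variable {B : Matrix m n R}

lemma mul_mul_transpose_apply_eq_sum_rowSupport [NonUnitalNonAssocSemiring R]
    (A : Matrix n n R) (i j : m) :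
    (B * A * B.transpose) i j =
      ∑ x ∈ rowSupport B i ×ˢ rowSupport B j, B i x.1 * A x.1 x.2 * B j x.2 := by
  simp only [Matrix.mul_apply, Matrix.transpose_apply, Finset.sum_mul]
  rw [← Fintype.sum_prod_type_right']
  refine (Finset.sum_subset (Finset.subset_univ _) fun x _ hx => ?_).symm
  simp only [rowSupport, Finset.mem_product, Finset.mem_filter, Finset.mem_univ, true_and,
    not_and_or, not_not] at hx
  rcases hx with h | h <;> simp only [h, zero_mul, mul_zero]

lemma mul_mul_transpose_apply_eq_sum_of_zero_or_one [NonAssocSemiring R]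
    (hB : ∀ i u, B i u = 0 ∨ B i u = 1) (A : Matrix n n R) (i j : m) :
    (B * A * B.transpose) i j = ∑ x ∈ rowSupport B i ×ˢ rowSupport B j, A x.1 x.2 := by
  have eq_one {i : m} {u : n} (hu : u ∈ rowSupport B i) : B i u = 1 :=
    (hB i u).resolve_left (Finset.mem_filter.mp hu).2
  rw [mul_mul_transpose_apply_eq_sum_rowSupport]
  refine Finset.sum_congr rfl fun x hx => ?_
  obtain ⟨hi, hj⟩ := Finset.mem_product.mp hx
  rw [eq_one hi, eq_one hj, one_mul, mul_one]

end RowSupport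

section Community

variable {m n κ : Type*} [Fintype κ]

lemma transpose_mul_self_apply_eq_ite {R : Type*} [NonAssocSemiring R] {Y : Matrix κ n R}
    (hY01 : ∀ k u, Y k u = 0 ∨ Y k u = 1)
    (hYcol : ∀ u, ∃! k, Y k u = 1) (u v : n) [Decidable (∃ k, Y k u = 1 ∧ Y k v = 1)] :
    (Y.transpose * Y) u v = if ∃ k, Y k u = 1 ∧ Y k v = 1 then 1 else 0 := by
  obtain ⟨k, hk, k_unique⟩ := hYcol u
  have sum_eq : (Y.transpose * Y) u v = Y k v := by
    rw [Matrix.mul_apply, Fintype.sum_eq_single k, Matrix.transpose_apply, hk, one_mul]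
    intro k' hk'
    rw [Matrix.transpose_apply, (hY01 k' u).resolve_right (mt (k_unique k') hk'), zero_mul]
  rw [sum_eq]
  split_ifs with h
  · obtain ⟨k', hu, hv⟩ := h
    rwa [← k_unique k' hu]
  · exact (hY01 k v).resolve_right fun hv => h ⟨k, hk, hv⟩

variable [Fintype n] {Y : Matrix κ n ℕ} {B : Matrix m n ℕ}
  [∀ u v, Decidable (∃ k, Y k u = 1 ∧ Y k v = 1)]

lemma card_filter_sameCommunity (hY01 : ∀ k u, Y k u = 0 ∨ Y k u = 1)
    (hYcol : ∀ u, ∃! k, Y k u = 1) (hB01 : ∀ i u, B i u = 0 ∨ B i u = 1) (i j : m) :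
    ((rowSupport B i ×ˢ rowSupport B j).filter fun x => ∃ k, Y k x.1 = 1 ∧ Y k x.2 = 1).card =
      (B * Y.transpose * (B * Y.transpose).transpose) i j := by
  have profile_mul : B * Y.transpose * (B * Y.transpose).transpose =
      B * (Y.transpose * Y) * B.transpose := by
    simp only [Matrix.transpose_mul, Matrix.transpose_transpose, Matrix.mul_assoc]
  rw [profile_mul, mul_mul_transpose_apply_eq_sum_of_zero_or_one hB01, Finset.card_filter]
  simp only [transpose_mul_self_apply_eq_ite hY01 hYcol]

lemma card_filter_not_sameCommunity (hY01 : ∀ k u, Y k u = 0 ∨ Y k u = 1)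
    (hYcol : ∀ u, ∃! k, Y k u = 1) (hB01 : ∀ i u, B i u = 0 ∨ B i u = 1) (i j : m) :
    ((rowSupport B i ×ˢ rowSupport B j).filter
        fun x => ¬ ∃ k, Y k x.1 = 1 ∧ Y k x.2 = 1).card =
      (rowSupport B i).card * (rowSupport B j).card -
        (B * Y.transpose * (B * Y.transpose).transpose) i j := by
  rw [← card_filter_sameCommunity hY01 hYcol hB01, ← Finset.card_product]
  exact Nat.eq_sub_of_add_eq' (Finset.card_filter_add_card_filter_not _)

end Community

section CoarsenedMatrix

variable {V ι Ω : Type*} [Fintype V] [LinearOrder V] [LinearOrder ι]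
  {mΩ : MeasurableSpace Ω} {μ : Measure Ω}

lemma iIndepFun_mul_mul_transpose {R : Type*} [NonUnitalNonAssocSemiring R] [DecidableEq R]
    [MeasurableSpace R] [MeasurableAdd₂ R] [MeasurableMul R] {B : Matrix ι V R}
    {F : Ω → Matrix V V R} (hB : Pairwise (Function.onFun Disjoint (rowSupport B)))
    (hF_meas : ∀ u v, Measurable fun ω => F ω u v) (hF_symm : ∀ ω, (F ω).IsSymm)
    (hF : iIndepFun (fun (e : {e : V × V // e.1 < e.2}) ω => F ω e.1.1 e.1.2) μ) :
    iIndepFun (fun (e : {e : ι × ι // e.2 < e.1}) ω =>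
      (B * F ω * B.transpose) e.1.1 e.1.2) μ := by
  have rectangles_indep := iIndepFun_of_pairwise_disjoint_rectangles hF_symm hF hB
  have blocks_indep : iIndepFun (fun (e : {e : ι × ι // e.2 < e.1}) ω
      (x : ↥(rowSupport B e.1.1 ×ˢ rowSupport B e.1.2)) => F ω x.1.1 x.1.2) μ :=
    iIndepFun_curry (fun _ _ => hF_meas _ _) rectangles_indep
  have weighted_sums_indep := blocks_indep.comp
    (fun e f => ∑ x, B e.1.1 x.1.1 * f x * B e.1.2 x.1.2) fun e => by fun_prop
  convert weighted_sums_indep using 3 with e ω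
  rw [mul_mul_transpose_apply_eq_sum_rowSupport, ← Finset.sum_coe_sort, Function.comp_apply]

lemma hasLaw_mul_mul_transpose_poissonBinomial {p q : ℝ≥0∞} {hp : p ≤ 1} {hq : q ≤ 1}
    {P : V → V → Prop} [DecidableRel P] {B : Matrix ι V ℕ} {F : Ω → Matrix V V ℕ}
    (hB01 : ∀ i u, B i u = 0 ∨ B i u = 1)
    (hB : Pairwise (Function.onFun Disjoint (rowSupport B))) (hF_symm : ∀ ω, (F ω).IsSymm)
    (hF : iIndepFun (fun (e : {e : V × V // e.1 < e.2}) ω => F ω e.1.1 e.1.2) μ)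
    (hF_law : ∀ u v, u ≠ v → HasLaw (fun ω => F ω u v)
      (if P u v then bernNat p hp else bernNat q hq).toMeasure μ)
    {i j : ι} (hji : j < i) :
    HasLaw (fun ω => (B * F ω * B.transpose) i j)
      (poissonBinomial p q hp hq
        ((rowSupport B i ×ˢ rowSupport B j).filter fun x => P x.1 x.2).card
        ((rowSupport B i ×ˢ rowSupport B j).filter fun x => ¬ P x.1 x.2).card).toMeasure μ := by
  let rect := rowSupport B i ×ˢ rowSupport B j
  have rect_ne (x : rect) : x.1.1 ≠ x.1.2 := fst_ne_snd_of_mem_product (hB hji.ne') x.2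
  have rect_indep : iIndepFun (fun (x : rect) ω => F ω x.1.1 x.1.2) μ :=
    iIndepFun_of_injective_sym2Mk hF_symm hF rect_ne <|
      (injective_sym2Mk_of_pairwise_disjoint hB).comp
        (sigma_mk_injective (i := (⟨(i, j), hji⟩ : {e : ι × ι // e.2 < e.1})))
  have rect_law (x : rect) : HasLaw (fun ω => F ω x.1.1 x.1.2)
      (if P x.1.1 x.1.2 then bernNat p hp else bernNat q hq).toMeasure μ :=
    hF_law _ _ (rect_ne x)
  have card_filter_rect (Q : V × V → Prop) [DecidablePred Q] :
      (Finset.univ.filter fun x : rect => Q x).card = (rect.filter Q).card := by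
    rw [Finset.card_filter, Finset.card_filter,
      Finset.sum_coe_sort rect fun x => if Q x then 1 else 0]
  rw [← card_filter_rect fun x => P x.1 x.2, ← card_filter_rect fun x => ¬ P x.1 x.2]
  convert hasLaw_finsetSum_poissonBinomial Finset.univ rect_indep rect_law using 1
  ext ω
  rw [mul_mul_transpose_apply_eq_sum_of_zero_or_one hB01, Finset.sum_apply,
    Finset.sum_coe_sort rect fun x => F ω x.1 x.2]

end CoarsenedMatrix

theorem coarsened_SSBM_binarized_entries_indep_bernoulli_general
    {V ι κ Ω : Type*} [Fintype V] [LinearOrder V] [LinearOrder ι] [Fintype κ]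
    {p q : ℝ≥0∞} (hp : p ≤ 1) (hq : q ≤ 1) (t : ℝ)
    (Y : Matrix κ V ℕ) [∀ u v, Decidable (∃ k, Y k u = 1 ∧ Y k v = 1)]
    (hY01 : ∀ k u, Y k u = 0 ∨ Y k u = 1) (hYcol : ∀ u, ∃! k, Y k u = 1)
    (B : Matrix ι V ℕ) (hB01 : ∀ i u, B i u = 0 ∨ B i u = 1)
    (hBdisj : ∀ i j, i ≠ j → ∀ u, B i u * B j u = 0)
    [MeasurableSpace Ω] (μ : Measure Ω) (F : Ω → Matrix V V ℕ)
    (hFmeas : ∀ u v, Measurable fun ω => F ω u v) (hFsymm : ∀ ω u v, F ω u v = F ω v u)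
    (hFindep : iIndepFun (fun (e : {e : V × V // e.1 < e.2}) ω => F ω e.1.1 e.1.2) μ)
    (hFlaw : ∀ u v, u < v → μ.map (fun ω => F ω u v) =
      (if ∃ k, Y k u = 1 ∧ Y k v = 1 then bernNat p hp else bernNat q hq).toMeasure) :
    iIndepFun (fun (e : {e : ι × ι // e.2 < e.1}) ω =>
        if t ≤ ((B * F ω * B.transpose) e.1.1 e.1.2 : ℝ) then (1 : ℕ) else 0) μ ∧
      ∀ i j, j < i →
        μ.map (fun ω => if t ≤ ((B * F ω * B.transpose) i j : ℝ) then (1 : ℕ) else 0) =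
          (bernNat
            ((poissonBinomial p q hp hq ((B * Y.transpose * (B * Y.transpose).transpose) i j)
              ((rowSupport B i).card * (rowSupport B j).card -
                (B * Y.transpose * (B * Y.transpose).transpose) i j)).toMeasure
              {n : ℕ | t ≤ (n : ℝ)})
            prob_le_one).toMeasure := by
  have hB := pairwise_disjoint_rowSupport hBdisj
  have hF_symm ω : (F ω).IsSymm := .ext fun u v => hFsymm ω v u
  have hF_law u v (huv : u ≠ v) : HasLaw (fun ω => F ω u v)
      (if ∃ k, Y k u = 1 ∧ Y k v = 1 then bernNat p hp else bernNat q hq).toMeasure μ := by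
    rcases huv.lt_or_gt with h | h
    · exact ⟨(hFmeas u v).aemeasurable, hFlaw u v h⟩
    · simpa only [hFsymm _ v u, and_comm] using
        HasLaw.mk (hFmeas v u).aemeasurable (hFlaw v u h)
  constructor
  · exact (iIndepFun_mul_mul_transpose hB hFmeas hF_symm hFindep).comp
      (fun _ n => if t ≤ (n : ℝ) then 1 else 0) fun _ => .of_discrete
  · intro i j hji
    have entry_law := hasLaw_mul_mul_transpose_poissonBinomial hB01 hB hF_symm hFindep hF_law hji
    rw [card_filter_sameCommunity hY01 hYcol hB01,
      card_filter_not_sameCommunity hY01 hYcol hB01] at entry_law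
    exact ((hasLaw_ite_bernNat (P := fun n : ℕ => t ≤ (n : ℝ)) .of_discrete).fun_comp
      entry_law).map_eq

open Classical in
/-- Binarizing the coarse matrix `C = B F Bᵀ` at the threshold
`r²(γp + (1−γ)q)` produces mutually independent entries (for `i > j`), each Bernoulli with
success probability `U(a_i,a_j) = P(X ≥ r²(γp + (1−γ)q))` for
`X ~ PoissonBinomial({p}^{a_i·a_j}, {q}^{r²−a_i·a_j})`. -/
theorem coarsened_SSBM_binarized_entries_indep_bernoulli
    {N K M r ν : ℕ} (hr : 0 < r) (hrM : r * M ≤ N) (hν : 1 ≤ ν)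
    (p q : ℝ) (hp0 : 0 ≤ p) (hp1 : p ≤ 1) (hq0 : 0 ≤ q) (hq1 : q ≤ 1)
    (γ : ℝ) (hγ0 : 0 ≤ γ) (hγ1 : γ ≤ 1)
    -- the community assignment matrix `Y`
    (Y : Matrix (Fin K) (Fin N) ℕ)
    (hY01 : ∀ k u, Y k u = 0 ∨ Y k u = 1)
    (hYcol : ∀ u, ∃! k, Y k u = 1)
    -- the measurement matrix `B`, with pairwise disjoint `r`-homogeneous rows
    (B : Matrix (Fin M) (Fin N) ℕ)
    (hB01 : ∀ i u, B i u = 0 ∨ B i u = 1)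
    (hBdisj : ∀ i j, i ≠ j → ∀ u, B i u * B j u = 0)
    (hBhom : ∀ i, (Finset.univ.filter fun u => B i u ≠ 0).card = r)
    -- `B` is CO-ν and balanced with respect to `Y`
    (hCO : ∀ i, 1 ≤ (Finset.univ.filter fun k => (B * Y.transpose) i k ≠ 0).card ∧
      (Finset.univ.filter fun k => (B * Y.transpose) i k ≠ 0).card ≤ ν)
    (hbal : ∀ i k, (B * Y.transpose) i k ≠ 0 →
      (B * Y.transpose) i k *
        (Finset.univ.filter fun k' => (B * Y.transpose) i k' ≠ 0).card = r)
    -- the random adjacency matrix `F`, drawn from `SSBM(N,K,p,q)` conditional on `Y`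
    {Ω : Type*} [MeasurableSpace Ω] (μ : Measure Ω) [IsProbabilityMeasure μ]
    (F : Ω → Matrix (Fin N) (Fin N) ℕ)
    (hFmeas : ∀ u v, Measurable fun ω => F ω u v)
    (hFsymm : ∀ ω u v, F ω u v = F ω v u)
    (hFdiag : ∀ ω u, F ω u u = 0)
    (hF01 : ∀ ω u v, F ω u v = 0 ∨ F ω u v = 1)
    (hFindep : iIndepFun
      (fun (e : {e : Fin N × Fin N // e.1 < e.2}) ω => F ω e.1.1 e.1.2) μ)
    (hFlaw : ∀ u v : Fin N, u < v →
      μ.map (fun ω => F ω u v) =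
        (if ∃ k, Y k u = 1 ∧ Y k v = 1 then
            bernNat (ENNReal.ofReal p) (ENNReal.ofReal_le_one.mpr hp1)
          else bernNat (ENNReal.ofReal q) (ENNReal.ofReal_le_one.mpr hq1)).toMeasure) :
    -- conclusion: the binarized entries `C̄_{ij}`, `i > j`, are mutually independent …
    iIndepFun
        (fun (e : {e : Fin M × Fin M // e.2 < e.1}) ω =>
          if (r : ℝ) ^ 2 * (γ * p + (1 - γ) * q) ≤
              ((B * F ω * B.transpose) e.1.1 e.1.2 : ℝ) then (1 : ℕ) else 0) μ ∧
      -- … and `C̄_{ij}` is Bernoulli with success probability `U(a_i, a_j)`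
      ∀ i j : Fin M, j < i →
        μ.map (fun ω =>
            if (r : ℝ) ^ 2 * (γ * p + (1 - γ) * q) ≤
                ((B * F ω * B.transpose) i j : ℝ) then (1 : ℕ) else 0) =
          (bernNat
              ((poissonBinomial (ENNReal.ofReal p) (ENNReal.ofReal q)
                  (ENNReal.ofReal_le_one.mpr hp1) (ENNReal.ofReal_le_one.mpr hq1)
                  ((B * Y.transpose * (B * Y.transpose).transpose) i j)
                  (r ^ 2 - (B * Y.transpose * (B * Y.transpose).transpose) i j)).toMeasure
                {n : ℕ | (r : ℝ) ^ 2 * (γ * p + (1 - γ) * q) ≤ (n : ℝ)})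
              prob_le_one).toMeasure := by
  simpa only [rowSupport, hBhom, ← sq r] using
    coarsened_SSBM_binarized_entries_indep_bernoulli_general (ENNReal.ofReal_le_one.mpr hp1)
      (ENNReal.ofReal_le_one.mpr hq1) ((r : ℝ) ^ 2 * (γ * p + (1 - γ) * q)) Y hY01 hYcol B hB01
      hBdisj μ F hFmeas hFsymm hFindep hFlaw
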